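/- arXiv:2605.02254 — 2 statements merged into one kernel-verified Lean document; each statement's English description precedes it below -/
import Mathlib

section
/- Let Cay(D_n, S) be a Cayley graph over the dihedral group D_n (n ≥ 2), let h be an integer with 1 ≤ h ≤ ⌊(n−1)/2⌋ such that η_h(S_2) ≠ 0, and let ℓ ∈ ℂ satisfy ℓ² η_h(S_2) = η_h(S_2^{-1}). Then the vector with entry conj(ℓ)·ω^{hk} at vertex a^k and entry ω^{hk} at vertex b a^k (0 ≤ k ≤ n−1), and the vector with entry ω^{−hk} at a^k and entry conj(ℓ)·ω^{−hk} at b a^k, are both eigenvectors of the adjacency matrix A with eigenvalue η_h(S_1) + ℓ·η_h(S_2). -/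
/-!
The function `χ(k) = ω^{hk}` is a character of `ZMod n`. The neighbours of a vertex `u` are the
`s⁻¹u` with `s ∈ S`; splitting `S` into rotations and reflections, multiplicativity of `χ` turns
each entry of `A v` into a combination of the character sums `η_h(S_1)`, `η_h(S_2)` and
`η_h(S_2^{-1})`. Closure of `S` under inversion makes the sums of `χ` and `χ⁻¹` over `S_1` agree,
while the sum of `χ⁻¹` over `S_2` is `η_h(S_2^{-1}) = ℓ² η_h(S_2)`. Moreover `η_h(S_2^{-1})` is the
complex conjugate of `η_h(S_2) ≠ 0`, so `|ℓ| = 1` (`conj_mul_self_eq_one`), and `conj(ℓ) ℓ = 1` is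
exactly what is needed to match every entry with the eigenvalue `η_h(S_1) + ℓ η_h(S_2)`.
-/

open Polynomial Matrix

noncomputable section

namespace PaperPST

/-! ### Grover-walk PST data for Cayley graphs over a general finite group -/

/-- The adjacency matrix of the Cayley graph `Cay(Γ, S)`: `A u v = 1` iff `u * v⁻¹ ∈ S`. -/
def adjG (Γ : Type*) [Group Γ] [Fintype Γ] [DecidableEq Γ] (S : Finset Γ) : Matrix Γ Γ ℂ :=
  Matrix.of fun u v => if u * v⁻¹ ∈ S then 1 else 0

/-- The discriminant matrix `P = (1/|S|) A` of `Cay(Γ, S)`. -/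
def discG (Γ : Type*) [Group Γ] [Fintype Γ] [DecidableEq Γ] (S : Finset Γ) : Matrix Γ Γ ℂ :=
  (S.card : ℂ)⁻¹ • adjG Γ S

/-- `T_τ(P)`, the `τ`-th Chebyshev polynomial of the first kind evaluated at the
discriminant matrix of `Cay(Γ, S)`. -/
def chebG (Γ : Type*) [Group Γ] [Fintype Γ] [DecidableEq Γ] (S : Finset Γ) (τ : ℕ) :
    Matrix Γ Γ ℂ :=
  Polynomial.aeval (discG Γ S) (Polynomial.Chebyshev.T ℂ τ)

/-- Perfect state transfer between vertices `u` and `v` of `Cay(Γ, S)` at time `τ`: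
`T_τ(P) e_u = e_v`. -/
def PSTG (Γ : Type*) [Group Γ] [Fintype Γ] [DecidableEq Γ] (S : Finset Γ) (τ : ℕ)
    (u v : Γ) : Prop :=
  chebG Γ S τ *ᵥ Pi.single u 1 = Pi.single v 1

/-- Evaluation of the `τ`-th Chebyshev polynomial of the first kind at a complex number. -/
def Teval (τ : ℕ) (x : ℂ) : ℂ := (Polynomial.Chebyshev.T ℂ τ).eval x

/-! ### Specialization to the dihedral group `D_n` -/

/-- Test whether an element of the dihedral group is a rotation `a^k`. -/
def isRot {n : ℕ} : DihedralGroup n → Bool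
  | .r _ => true
  | .sr _ => false

/-- The adjacency matrix of the Cayley graph `Cay(D_n, S)`. -/
def adjC (n : ℕ) (S : Finset (DihedralGroup n)) :
    Matrix (DihedralGroup n) (DihedralGroup n) ℂ :=
  Matrix.of fun u v => if u * v⁻¹ ∈ S then 1 else 0

/-- The discriminant matrix `P = (1/|S|) A` of `Cay(D_n, S)`. -/
def disc (n : ℕ) (S : Finset (DihedralGroup n)) :
    Matrix (DihedralGroup n) (DihedralGroup n) ℂ :=
  (S.card : ℂ)⁻¹ • adjC n S

/-- `T_τ(P)`, the `τ`-th Chebyshev polynomial of the first kind evaluated at the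
discriminant matrix. -/
def chebP (n : ℕ) [NeZero n] (S : Finset (DihedralGroup n)) (τ : ℕ) :
    Matrix (DihedralGroup n) (DihedralGroup n) ℂ :=
  Polynomial.aeval (disc n S) (Polynomial.Chebyshev.T ℂ τ)

/-- Perfect state transfer between vertices `u` and `v` of `Cay(D_n, S)` at time `τ`:
`T_τ(P) e_u = e_v`. -/
def PST (n : ℕ) [NeZero n] (S : Finset (DihedralGroup n)) (τ : ℕ)
    (u v : DihedralGroup n) : Prop :=
  chebP n S τ *ᵥ Pi.single u 1 = Pi.single v 1

/-- `ω = e^{2πi/n}`. -/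
def omega (n : ℕ) : ℂ := Complex.exp (2 * Real.pi * Complex.I / n)

/-- `η_h(C) = Σ_{0 ≤ k ≤ n-1, a^k ∈ C} ω^{hk}`. -/
def eta (n : ℕ) (h : ℕ) (C : Finset (DihedralGroup n)) : ℂ :=
  ∑ k ∈ Finset.range n, if DihedralGroup.r (k : ZMod n) ∈ C then omega n ^ (h * k) else 0

/-- `S_1 = S ∩ ⟨a⟩`. -/
def S1 (n : ℕ) (S : Finset (DihedralGroup n)) : Finset (DihedralGroup n) :=
  S.filter fun x => isRot x

/-- `S_2 = bS ∩ ⟨a⟩`, i.e. `{a^k : b a^k ∈ S}`. -/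
def S2 (n : ℕ) (S : Finset (DihedralGroup n)) : Finset (DihedralGroup n) :=
  (S.image fun s => DihedralGroup.sr 0 * s).filter fun x => isRot x

/-- `S_2⁻¹ = {s⁻¹ : s ∈ S_2}`. -/
def S2inv (n : ℕ) (S : Finset (DihedralGroup n)) : Finset (DihedralGroup n) :=
  (S2 n S).image fun x => x⁻¹

/-- The number of `a^k ∈ C` with `0 ≤ k ≤ n-1` and `k % 2 = p`. -/
def dcnt (n : ℕ) (C : Finset (DihedralGroup n)) (p : ℕ) : ℕ :=
  ((Finset.range n).filter fun k => k % 2 = p ∧ DihedralGroup.r (k : ZMod n) ∈ C).card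

/-- Vertex labels `0, …, 2n-1`: label `u < n` is `a^u`, and label `n ≤ u < 2n` is `b a^{u-n}`. -/
def lab (n : ℕ) (u : ℕ) : DihedralGroup n :=
  if u < n then DihedralGroup.r (u : ZMod n) else DihedralGroup.sr ((u - n : ℕ) : ZMod n)

/-- `Cay(D_n, S)` is a normal Cayley graph if `S` is closed under conjugation. -/
def IsNormalCay (n : ℕ) (S : Finset (DihedralGroup n)) : Prop :=
  ∀ g : DihedralGroup n, ∀ s ∈ S, g * s * g⁻¹ ∈ S

/-- `Cay(D_n, S)` exhibits PST at the minimum time `τ`. -/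
def exhibitsMinPST (n : ℕ) [NeZero n] (S : Finset (DihedralGroup n)) (τ : ℕ) : Prop :=
  (∃ u v : DihedralGroup n, u ≠ v ∧ PST n S τ u v) ∧
  ∀ σ : ℕ, 1 ≤ σ → σ < τ → ∀ u v : DihedralGroup n, u ≠ v → ¬ PST n S σ u v

/-! ### Eigenvector candidates -/

/-- The all-ones vector. -/
def w1 (n : ℕ) : DihedralGroup n → ℂ := fun _ => 1

/-- The vector which is `1` on `G_0` and `-1` on `G_1`. -/
def w2 (n : ℕ) : DihedralGroup n → ℂ
  | .r _ => 1
  | .sr _ => -1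

/-- The vector with entry `(-1)^k` at `a^k` and `(-1)^k` at `b a^k`. -/
def w3 (n : ℕ) : DihedralGroup n → ℂ
  | .r k => (-1) ^ k.val
  | .sr k => (-1) ^ k.val

/-- The vector with entry `(-1)^k` at `a^k` and `(-1)^{k+1}` at `b a^k`. -/
def w4 (n : ℕ) : DihedralGroup n → ℂ
  | .r k => (-1) ^ k.val
  | .sr k => (-1) ^ (k.val + 1)

/-- The vector with entry `ω^{hk}` at `a^k` and `0` at `b a^k`. -/
def uv1 (n h : ℕ) : DihedralGroup n → ℂ
  | .r k => omega n ^ (h * k.val)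
  | .sr _ => 0

/-- The vector with entry `0` at `a^k` and `ω^{hk}` at `b a^k`. -/
def uv2 (n h : ℕ) : DihedralGroup n → ℂ
  | .r _ => 0
  | .sr k => omega n ^ (h * k.val)

/-- The vector with entry `0` at `a^k` and `ω^{-hk}` at `b a^k`. -/
def uv3 (n h : ℕ) : DihedralGroup n → ℂ
  | .r _ => 0
  | .sr k => (omega n)⁻¹ ^ (h * k.val)

/-- The vector with entry `ω^{-hk}` at `a^k` and `0` at `b a^k`. -/
def uv4 (n h : ℕ) : DihedralGroup n → ℂ
  | .r k => (omega n)⁻¹ ^ (h * k.val)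
  | .sr _ => 0

/-- The vector with entry `conj(ℓ)·ω^{hk}` at `a^k` and `ω^{hk}` at `b a^k`. -/
def vv1 (n h : ℕ) (ℓ : ℂ) : DihedralGroup n → ℂ
  | .r k => (starRingEnd ℂ) ℓ * omega n ^ (h * k.val)
  | .sr k => omega n ^ (h * k.val)

/-- The vector with entry `ω^{-hk}` at `a^k` and `conj(ℓ)·ω^{-hk}` at `b a^k`. -/
def vv2 (n h : ℕ) (ℓ : ℂ) : DihedralGroup n → ℂ
  | .r k => (omega n)⁻¹ ^ (h * k.val)
  | .sr k => (starRingEnd ℂ) ℓ * (omega n)⁻¹ ^ (h * k.val)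

/-- The vector with entry `-ω^{hk}` at `a^k` and `ℓ·ω^{hk}` at `b a^k`. -/
def vv3 (n h : ℕ) (ℓ : ℂ) : DihedralGroup n → ℂ
  | .r k => -(omega n ^ (h * k.val))
  | .sr k => ℓ * omega n ^ (h * k.val)

/-- The vector with entry `ℓ·ω^{-hk}` at `a^k` and `-ω^{-hk}` at `b a^k`. -/
def vv4 (n h : ℕ) (ℓ : ℂ) : DihedralGroup n → ℂ
  | .r k => ℓ * (omega n)⁻¹ ^ (h * k.val)
  | .sr k => -((omega n)⁻¹ ^ (h * k.val))

/-- The additive character `k ↦ ω^{hk}` of `ZMod n`. -/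
def chi (n h : ℕ) (k : ZMod n) : ℂ := omega n ^ (h * k.val)

theorem omega_pow_n (n : ℕ) [NeZero n] : omega n ^ n = 1 := by
  have hn : (n : ℂ) ≠ 0 := NeZero.ne _
  rw [omega, ← Complex.exp_nat_mul, mul_div_cancel₀ _ hn, Complex.exp_two_pi_mul_I]

theorem omega_pow_mod (n h m : ℕ) [NeZero n] : omega n ^ (h * (m % n)) = omega n ^ (h * m) := by
  conv_rhs => rw [← Nat.div_add_mod m n]
  rw [mul_add, pow_add, mul_left_comm, pow_mul (omega n) n, omega_pow_n, one_pow, one_mul]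

theorem chi_add (n h : ℕ) [NeZero n] (i j : ZMod n) :
    chi n h (i + j) = chi n h i * chi n h j := by
  rw [chi, chi, chi, ZMod.val_add, omega_pow_mod, mul_add, pow_add]

theorem chi_zero (n h : ℕ) [NeZero n] : chi n h 0 = 1 := by
  simp [chi]

theorem chi_ne_zero (n h : ℕ) (k : ZMod n) : chi n h k ≠ 0 :=
  pow_ne_zero _ (Complex.exp_ne_zero _)

theorem chi_neg (n h : ℕ) [NeZero n] (k : ZMod n) : chi n h (-k) = (chi n h k)⁻¹ := by
  apply eq_inv_of_mul_eq_one_left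
  rw [← chi_add, neg_add_cancel, chi_zero]

theorem conj_chi (n h : ℕ) [NeZero n] (k : ZMod n) :
    (starRingEnd ℂ) (chi n h k) = chi n h (-k) := by
  have h1 : ‖chi n h k‖ = 1 := by
    rw [chi, norm_pow, Complex.norm_eq_one_of_pow_eq_one (omega_pow_n n) (NeZero.ne n), one_pow]
  rw [chi_neg, Complex.inv_eq_conj h1]

theorem eta_eq (n h : ℕ) [NeZero n] (C : Finset (DihedralGroup n)) :
    eta n h C = ∑ k : ZMod n, if DihedralGroup.r k ∈ C then chi n h k else 0 := by
  rw [eta]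
  refine Finset.sum_bij' (fun k _ => (k : ZMod n)) (fun k _ => k.val) ?_ ?_ ?_ ?_ ?_
  · simp
  · intro k _
    simpa using ZMod.val_lt k
  · intro k hk
    exact ZMod.val_cast_of_lt (Finset.mem_range.mp hk)
  · simp
  · intro k hk
    simp only [chi, ZMod.val_cast_of_lt (Finset.mem_range.mp hk)]

theorem mem_S1 (n : ℕ) (S : Finset (DihedralGroup n)) (k : ZMod n) :
    DihedralGroup.r k ∈ S1 n S ↔ DihedralGroup.r k ∈ S := by
  rw [S1, Finset.mem_filter]
  exact and_iff_left rfl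

theorem mem_S2 (n : ℕ) (S : Finset (DihedralGroup n)) (k : ZMod n) :
    DihedralGroup.r k ∈ S2 n S ↔ DihedralGroup.sr k ∈ S := by
  rw [S2, Finset.mem_filter, Finset.mem_image]
  constructor
  · rintro ⟨⟨s, hs, e⟩, -⟩
    cases s with
    | r i => simp at e
    | sr i =>
      simp only [DihedralGroup.sr_mul_sr, sub_zero, DihedralGroup.r.injEq] at e
      exact e ▸ hs
  · intro hk
    exact ⟨⟨_, hk, by simp⟩, rfl⟩

theorem mem_S2inv (n : ℕ) (S : Finset (DihedralGroup n)) (k : ZMod n) :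
    DihedralGroup.r k ∈ S2inv n S ↔ DihedralGroup.sr (-k) ∈ S := by
  rw [← mem_S2, S2inv, Finset.mem_image]
  constructor
  · rintro ⟨x, hx, e⟩
    rw [← DihedralGroup.inv_r, ← e, inv_inv]
    exact hx
  · intro hk
    exact ⟨_, hk, by simp⟩

theorem sum_dihedral (n : ℕ) [NeZero n] (f : DihedralGroup n → ℂ) :
    ∑ g, f g = ∑ k : ZMod n, f (.r k) + ∑ k : ZMod n, f (.sr k) := by
  rw [← (DihedralGroup.equivSum (n := n)).symm.sum_comp, Fintype.sum_sum_type]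
  rfl

theorem mem_neg_r {n : ℕ} {S : Finset (DihedralGroup n)} (hSinv : ∀ s ∈ S, s⁻¹ ∈ S)
    (k : ZMod n) : DihedralGroup.r (-k) ∈ S ↔ DihedralGroup.r k ∈ S := by
  constructor <;> intro hk <;> simpa using hSinv _ hk

/-- `η_h(S_1)` is also the sum of `ω^{-hk}` over `a^k ∈ S`, as `S` is closed under inversion. -/
theorem eta_S1_neg (n h : ℕ) [NeZero n] {S : Finset (DihedralGroup n)}
    (hSinv : ∀ s ∈ S, s⁻¹ ∈ S) :
    (∑ k : ZMod n, if DihedralGroup.r k ∈ S then chi n h (-k) else 0) = eta n h (S1 n S) := by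
  rw [eta_eq, ← Equiv.sum_comp (Equiv.neg (ZMod n))]
  simp [mem_S1, mem_neg_r hSinv]

theorem eta_S2inv (n h : ℕ) [NeZero n] (S : Finset (DihedralGroup n)) :
    eta n h (S2inv n S) =
      ∑ k : ZMod n, if DihedralGroup.sr k ∈ S then chi n h (-k) else 0 := by
  rw [eta_eq, ← Equiv.sum_comp (Equiv.neg (ZMod n))]
  simp [mem_S2inv]

theorem eta_S2inv_conj (n h : ℕ) [NeZero n] (S : Finset (DihedralGroup n)) :
    eta n h (S2inv n S) = (starRingEnd ℂ) (eta n h (S2 n S)) := by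
  rw [eta_S2inv, eta_eq, map_sum]
  refine Finset.sum_congr rfl fun k _ => ?_
  rw [apply_ite (starRingEnd ℂ), conj_chi, map_zero]
  simp only [mem_S2]

/-- Since `η_h(S_2^{-1})` is the conjugate of `η_h(S_2) ≠ 0`, the number `ℓ` has modulus one. -/
theorem conj_mul_self_eq_one (n h : ℕ) [NeZero n] (S : Finset (DihedralGroup n))
    (hnz : eta n h (S2 n S) ≠ 0) (ℓ : ℂ)
    (hℓ : ℓ ^ 2 * eta n h (S2 n S) = eta n h (S2inv n S)) :
    (starRingEnd ℂ) ℓ * ℓ = 1 := by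
  have h1 : ‖ℓ‖ ^ 2 * ‖eta n h (S2 n S)‖ = 1 * ‖eta n h (S2 n S)‖ := by
    rw [← norm_pow, ← norm_mul, hℓ, eta_S2inv_conj, RCLike.norm_conj, one_mul]
  have h2 := mul_right_cancel₀ (norm_ne_zero_iff.mpr hnz) h1
  rw [mul_comm, Complex.mul_conj, Complex.normSq_eq_norm_sq, h2, Complex.ofReal_one]

/-- The action of the adjacency matrix on a vector, with the vertices reached by an element of `S`
parametrised by that element: `v = s⁻¹ u`. -/
theorem adjC_mulVec_apply (n : ℕ) [NeZero n] (S : Finset (DihedralGroup n))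
    (f : DihedralGroup n → ℂ) (u : DihedralGroup n) :
    (adjC n S *ᵥ f) u =
      (∑ k : ZMod n, if DihedralGroup.r k ∈ S then f ((.r k)⁻¹ * u) else 0) +
      ∑ k : ZMod n, if DihedralGroup.sr k ∈ S then f ((.sr k)⁻¹ * u) else 0 := by
  rw [← sum_dihedral n fun s => if s ∈ S then f (s⁻¹ * u) else 0]
  rw [← ((Equiv.inv (DihedralGroup n)).trans (Equiv.mulLeft u)).sum_comp]
  simp [adjC, Matrix.mulVec, dotProduct]

theorem vv1_r (n h : ℕ) (ℓ : ℂ) (k : ZMod n) :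
    vv1 n h ℓ (.r k) = (starRingEnd ℂ) ℓ * chi n h k := rfl

theorem vv1_sr (n h : ℕ) (ℓ : ℂ) (k : ZMod n) : vv1 n h ℓ (.sr k) = chi n h k := rfl

theorem vv2_r (n h : ℕ) [NeZero n] (ℓ : ℂ) (k : ZMod n) :
    vv2 n h ℓ (.r k) = chi n h (-k) := by
  rw [chi_neg, chi, ← inv_pow, vv2]

theorem vv2_sr (n h : ℕ) [NeZero n] (ℓ : ℂ) (k : ZMod n) :
    vv2 n h ℓ (.sr k) = (starRingEnd ℂ) ℓ * chi n h (-k) := by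
  rw [chi_neg, chi, ← inv_pow, vv2]

/-- Evaluates a sum over a subset of `ZMod n` whose terms are a constant multiple of `g`. -/
theorem sum_ite_mul (n : ℕ) [NeZero n] (P : ZMod n → Prop) [DecidablePred P]
    (f g : ZMod n → ℂ) (c : ℂ) (hf : ∀ k, f k = c * g k) :
    (∑ k, if P k then f k else 0) = c * ∑ k, if P k then g k else 0 := by
  rw [Finset.mul_sum]
  exact Finset.sum_congr rfl fun k _ => by rw [hf, mul_ite, mul_zero]

theorem stmt_3 (n : ℕ) [NeZero n] (hn : 2 ≤ n)
    (S : Finset (DihedralGroup n)) (hS1 : (1 : DihedralGroup n) ∉ S)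
    (hSinv : ∀ s ∈ S, s⁻¹ ∈ S) (hSne : S.Nonempty)
    (h : ℕ) (hh1 : 1 ≤ h) (hh2 : h ≤ (n - 1) / 2) (hnz : eta n h (S2 n S) ≠ 0)
    (ℓ : ℂ) (hℓ : ℓ ^ 2 * eta n h (S2 n S) = eta n h (S2inv n S)) :
    (adjC n S *ᵥ vv1 n h ℓ =
      (eta n h (S1 n S) + ℓ * eta n h (S2 n S)) • vv1 n h ℓ ∧ vv1 n h ℓ ≠ 0) ∧
    (adjC n S *ᵥ vv2 n h ℓ =
      (eta n h (S1 n S) + ℓ * eta n h (S2 n S)) • vv2 n h ℓ ∧ vv2 n h ℓ ≠ 0) := by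
  have hc := conj_mul_self_eq_one n h S hnz ℓ hℓ
  -- The four character sums over the rotations and reflections in `S`.
  have e1 : (∑ k : ZMod n, if DihedralGroup.r k ∈ S then chi n h k else 0) =
      eta n h (S1 n S) := by
    rw [eta_eq]
    simp only [mem_S1]
  have e1' := eta_S1_neg n h hSinv
  have e2 : (∑ k : ZMod n, if DihedralGroup.sr k ∈ S then chi n h k else 0) =
      eta n h (S2 n S) := by
    rw [eta_eq]
    simp only [mem_S2]
  have e2' : (∑ k : ZMod n, if DihedralGroup.sr k ∈ S then chi n h (-k) else 0) =
      ℓ ^ 2 * eta n h (S2 n S) := by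
    rw [hℓ, eta_S2inv]
  refine ⟨⟨?_, ?_⟩, ⟨?_, ?_⟩⟩
  · ext u
    rw [adjC_mulVec_apply, Pi.smul_apply, smul_eq_mul]
    cases u with
    | r i =>
      simp only [DihedralGroup.inv_r, DihedralGroup.inv_sr, DihedralGroup.r_mul_r,
        DihedralGroup.sr_mul_r, vv1_r, vv1_sr]
      rw [sum_ite_mul n (fun k => DihedralGroup.r k ∈ S) _ (fun k => chi n h (-k)) ((starRingEnd ℂ) ℓ * chi n h i)
          fun k => by rw [chi_add]; ring,
        sum_ite_mul n (fun k => DihedralGroup.sr k ∈ S) _ (chi n h) (chi n h i) fun k => by rw [chi_add]; ring, e1', e2]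
      linear_combination -(chi n h i * eta n h (S2 n S)) * hc
    | sr i =>
      simp only [DihedralGroup.inv_r, DihedralGroup.inv_sr, DihedralGroup.r_mul_sr,
        DihedralGroup.sr_mul_sr, vv1_r, vv1_sr]
      rw [sum_ite_mul n (fun k => DihedralGroup.r k ∈ S) _ (chi n h) (chi n h i)
          fun k => by rw [sub_neg_eq_add, chi_add],
        sum_ite_mul n (fun k => DihedralGroup.sr k ∈ S) _ (fun k => chi n h (-k)) ((starRingEnd ℂ) ℓ * chi n h i)
          fun k => by rw [sub_eq_add_neg, chi_add]; ring, e1, e2']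
      linear_combination (chi n h i * ℓ * eta n h (S2 n S)) * hc
  · intro h0
    exact chi_ne_zero n h 0 (congrFun h0 (.sr 0))
  · ext u
    rw [adjC_mulVec_apply, Pi.smul_apply, smul_eq_mul]
    cases u with
    | r i =>
      simp only [DihedralGroup.inv_r, DihedralGroup.inv_sr, DihedralGroup.r_mul_r,
        DihedralGroup.sr_mul_r, vv2_r, vv2_sr]
      rw [sum_ite_mul n (fun k => DihedralGroup.r k ∈ S) _ (chi n h) (chi n h (-i))
          fun k => by rw [← chi_add]; congr 1; ring,
        sum_ite_mul n (fun k => DihedralGroup.sr k ∈ S) _ (fun k => chi n h (-k)) ((starRingEnd ℂ) ℓ * chi n h (-i))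
          fun k => by rw [mul_assoc, ← chi_add]; congr 2; ring, e1, e2']
      linear_combination (chi n h (-i) * ℓ * eta n h (S2 n S)) * hc
    | sr i =>
      simp only [DihedralGroup.inv_r, DihedralGroup.inv_sr, DihedralGroup.r_mul_sr,
        DihedralGroup.sr_mul_sr, vv2_r, vv2_sr]
      rw [sum_ite_mul n (fun k => DihedralGroup.r k ∈ S) _ (fun k => chi n h (-k)) ((starRingEnd ℂ) ℓ * chi n h (-i))
          fun k => by rw [mul_assoc, ← chi_add]; congr 2; ring,
        sum_ite_mul n (fun k => DihedralGroup.sr k ∈ S) _ (chi n h) (chi n h (-i))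
          fun k => by rw [← chi_add]; congr 1; ring, e1', e2]
      linear_combination -(chi n h (-i) * eta n h (S2 n S)) * hc
  · intro h0
    apply chi_ne_zero n h (-0)
    rw [← vv2_r n h ℓ 0, h0, Pi.zero_apply]

end PaperPST
end
end

section
/- Let G = Cay(Γ, S) be a Cayley graph over a finite group Γ. If PST occurs between some pair of distinct vertices of G at time τ, then T_τ(μ) ∈ {−1, 1} for every eigenvalue μ of the discriminant matrix P (that is, for every μ such that P x = μ x for some nonzero vector x). -/
/-!
Write `M = T_τ(P)`. Right translations are automorphisms of `Cay(Γ, S)`, so `M` is invariant under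
them (`chebG_mul_right`). Hence `M e_u = e_v` forces `M e_w = e_{v u⁻¹ w}` for every `w`, that is,
`M` is the permutation matrix of left translation by `v u⁻¹` (`chebG_apply_of_PSTG`). Since
`S = S⁻¹`, the matrices `P` and `M` are symmetric, and a symmetric permutation matrix satisfies
`M² = Mᵀ M = 1`. An eigenvector of `P` for `μ` is an eigenvector of `M` for `T_τ(μ)`, whence
`T_τ(μ)² = 1`.
-/

open Polynomial Matrix

noncomputable section

namespace PaperPST

lemma chebG_mul_right (Γ : Type*) [Group Γ] [Fintype Γ] [DecidableEq Γ] (S : Finset Γ) (τ : ℕ)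
    (g a b : Γ) : chebG Γ S τ (a * g) (b * g) = chebG Γ S τ a b := by
  have hP : Matrix.reindexAlgEquiv ℂ ℂ (Equiv.mulRight g⁻¹) (discG Γ S) = discG Γ S := by
    ext i j
    simp [discG, adjG]
  have hM : Matrix.reindexAlgEquiv ℂ ℂ (Equiv.mulRight g⁻¹) (chebG Γ S τ) = chebG Γ S τ := by
    rw [chebG, ← Polynomial.aeval_algHom_apply, hP]
  have h := congrFun (congrFun hM a) b
  simpa using h

lemma chebG_transpose (Γ : Type*) [Group Γ] [Fintype Γ] [DecidableEq Γ] (S : Finset Γ)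
    (hSinv : ∀ s ∈ S, s⁻¹ ∈ S) (τ : ℕ) : (chebG Γ S τ)ᵀ = chebG Γ S τ := by
  have hP : (discG Γ S)ᵀ = discG Γ S := by
    ext i j
    have h : j * i⁻¹ ∈ S ↔ i * j⁻¹ ∈ S :=
      ⟨fun h => by simpa using hSinv _ h, fun h => by simpa using hSinv _ h⟩
    simp [discG, adjG, h]
  simp only [chebG, Polynomial.aeval_eq_sum_range, Matrix.transpose_sum, Matrix.transpose_smul,
    Matrix.transpose_pow, hP]

/-- Under PST from `u` to `v`, the matrix `T_τ(P)` is the permutation matrix of left translation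
by `v * u⁻¹`. -/
lemma chebG_apply_of_PSTG (Γ : Type*) [Group Γ] [Fintype Γ] [DecidableEq Γ] (S : Finset Γ) (τ : ℕ)
    (u v : Γ) (hpst : PSTG Γ S τ u v) (a b : Γ) :
    chebG Γ S τ a b = if a = v * u⁻¹ * b then 1 else 0 := by
  have h := congrFun hpst (a * (b⁻¹ * u))
  have ht := chebG_mul_right Γ S τ (b⁻¹ * u) a b
  rw [mul_inv_cancel_left] at ht
  rw [Matrix.mulVec_single_one, Matrix.col_apply, ht, Pi.single_apply] at h
  rw [h]
  congr 1
  rw [eq_iff_iff, ← mul_assoc, ← eq_mul_inv_iff_mul_eq, ← eq_mul_inv_iff_mul_eq, inv_inv]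

lemma aeval_mulVec_of_eigenvector {n : Type*} [Fintype n] [DecidableEq n] (P : Matrix n n ℂ)
    (x : n → ℂ) (μ : ℂ) (h : P *ᵥ x = μ • x) (p : ℂ[X]) :
    Polynomial.aeval P p *ᵥ x = p.eval μ • x := by
  have hpow : ∀ k : ℕ, (P ^ k) *ᵥ x = μ ^ k • x := by
    intro k
    induction k with
    | zero => simp
    | succ k ih =>
      rw [pow_succ, ← Matrix.mulVec_mulVec, h, Matrix.mulVec_smul, ih, smul_smul, pow_succ']
  simp only [Polynomial.aeval_eq_sum_range, Polynomial.eval_eq_sum_range, Matrix.sum_mulVec,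
    Matrix.smul_mulVec, hpow, smul_smul, Finset.sum_smul]

theorem stmt_7 (Γ : Type*) [Group Γ] [Fintype Γ] [DecidableEq Γ]
    (S : Finset Γ) (hS1 : (1 : Γ) ∉ S) (hSinv : ∀ s ∈ S, s⁻¹ ∈ S) (hSne : S.Nonempty)
    (τ : ℕ) (hτ : 1 ≤ τ) (u v : Γ) (huv : u ≠ v) (hpst : PSTG Γ S τ u v) :
    ∀ μ : ℂ, (∃ x : Γ → ℂ, x ≠ 0 ∧ discG Γ S *ᵥ x = μ • x) →
      Teval τ μ = 1 ∨ Teval τ μ = -1 := by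
  rintro μ ⟨x, hx, hμ⟩
  have hsq : chebG Γ S τ * chebG Γ S τ = 1 := by
    nth_rewrite 1 [← chebG_transpose Γ S hSinv τ]
    ext a b
    simp [Matrix.mul_apply, chebG_apply_of_PSTG Γ S τ u v hpst, Matrix.one_apply, eq_comm]
  have hT : chebG Γ S τ *ᵥ x = Teval τ μ • x := aeval_mulVec_of_eigenvector _ x μ hμ _
  have h2 : (Teval τ μ * Teval τ μ) • x = (1 : ℂ) • x := by
    rw [← smul_smul, ← hT, ← Matrix.mulVec_smul, ← hT, Matrix.mulVec_mulVec, hsq,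
      Matrix.one_mulVec, one_smul]
  exact mul_self_eq_one_iff.mp (smul_left_injective ℂ hx h2)

end PaperPST
end
end
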